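/- Let n, m be positive integers with m ≥ 2n - 1, and let a_1, …, a_m ∈ ℝ^n be such that every subset of {a_1, …, a_m} of cardinality n is linearly independent (full spark). Then the phaseless measurement map f : ℝ^n → ℝ^m, f(x)_j = |⟨a_j, x⟩|², is injective up to a global sign: for all x, y ∈ ℝ^n, if |⟨a_j, x⟩|² = |⟨a_j, y⟩|² for all j = 1, …, m, then y = x or y = -x. -/

import Mathlib

/-!
If `|⟨a_j, x⟩| = |⟨a_j, y⟩|` for all `j`, then each `a_j` is orthogonal to `y - x` or to `y + x`.
This splits the index set into two complementary parts, and as `m ≥ 2n - 1` one of them has at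
least `n` elements. Its vectors span the whole space, so the corresponding one of `y - x` and
`y + x` vanishes.
-/

open Module Submodule

section Definitions

variable {ι : Type*} (R : Type*) {M : Type*} [Semiring R] [AddCommMonoid M] [Module R M]

/-- A family of vectors is full spark if any `finrank R M` of its members, chosen at distinct
indices, are linearly independent. This is the genericity condition on frames. It is meant for
modules of finite rank: `finrank` is `0` otherwise, and the condition is then empty. -/
def FullSpark (a : ι → M) : Prop :=
  ∀ s : Finset ι, s.card = finrank R M → LinearIndependent R fun j : s ↦ a j

/-- The complement property of frame theory: however the index set is split into two parts, the
vectors of one of the parts span the whole module. Over `ℝ` it characterizes the frames whose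
phaseless measurements determine a vector up to sign. -/
def ComplementProperty (a : ι → M) : Prop :=
  ∀ S : Set ι, span R (a '' S) = ⊤ ∨ span R (a '' Sᶜ) = ⊤

end Definitions

section FullSpark

variable {ι K V : Type*} [DivisionRing K] [AddCommGroup V] [Module K V] [FiniteDimensional K V]
  {a : ι → V}

theorem FullSpark.span_image_eq_top (ha : FullSpark K a) {S : Set ι}
    (hS : finrank K V ≤ S.encard) : span K (a '' S) = ⊤ := by
  obtain ⟨T, hTS, hT⟩ := Set.exists_subset_encard_eq hS
  lift T to Finset ι using Set.finite_of_encard_eq_coe hT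
  have hcard : T.card = finrank K V := by simpa using hT
  have hspan : span K (Set.range fun j : T ↦ a j) = ⊤ :=
    (ha T hcard).span_eq_top_of_card_eq_finrank' (by simpa using hcard)
  refine eq_top_mono (span_mono ?_) hspan
  rintro _ ⟨j, rfl⟩
  exact Set.mem_image_of_mem a (hTS j.2)

theorem FullSpark.complementProperty (ha : FullSpark K a)
    (hι : 2 * finrank K V ≤ ENat.card ι + 1) : ComplementProperty K a := by
  intro S
  suffices h : finrank K V ≤ S.encard ∨ finrank K V ≤ Sᶜ.encard from
    h.imp ha.span_image_eq_top ha.span_image_eq_top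
  by_contra! ⟨hS, hSc⟩
  rw [← Set.encard_univ, ← Set.encard_add_encard_compl S] at hι
  lift S.encard to ℕ using hS.ne_top with k
  lift Sᶜ.encard to ℕ using hSc.ne_top with l
  norm_cast at hS hSc hι
  lia

end FullSpark

theorem ComplementProperty.eq_or_eq_neg_of_sq_eq_sq {ι R M N : Type*} [CommRing R]
    [NoZeroDivisors R] [AddCommGroup M] [Module R M] [AddCommGroup N] [Module R N] {a : ι → M}
    (ha : ComplementProperty R a) {B : M →ₗ[R] N →ₗ[R] R} (hB : B.SeparatingRight) {x y : N}
    (h : ∀ j, B (a j) x ^ 2 = B (a j) y ^ 2) : y = x ∨ y = -x := by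
  have flip_injective : Function.Injective B.flip :=
    LinearMap.ker_eq_bot.mp (LinearMap.separatingRight_iff_flip_ker_eq_bot.mp hB)
  rcases ha {j | B (a j) y = B (a j) x} with hspan | hspan
  · left
    apply flip_injective
    refine LinearMap.ext_on hspan ?_
    rintro _ ⟨j, hj, rfl⟩
    exact hj
  · right
    apply flip_injective
    refine LinearMap.ext_on hspan ?_
    rintro _ ⟨j, hj, rfl⟩
    simpa using (sq_eq_sq_iff_eq_or_eq_neg.mp (h j).symm).resolve_left hj

theorem separatingRight_dotProductBilin (R n : Type*) [CommSemiring R] [Fintype n] :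
    (dotProductBilin R R : (n → R) →ₗ[R] (n → R) →ₗ[R] R).SeparatingRight :=
  fun v hv ↦ dotProduct_eq_zero v fun w ↦ (dotProduct_comm v w).trans (hv w)

theorem fullSpark_injective_up_to_sign_general {ι K V W : Type*} [Field K]
    [AddCommGroup V] [Module K V] [FiniteDimensional K V] [AddCommGroup W] [Module K W]
    {a : ι → V} (ha : FullSpark K a) (hι : 2 * finrank K V ≤ ENat.card ι + 1)
    {B : V →ₗ[K] W →ₗ[K] K} (hB : B.SeparatingRight) {x y : W}
    (h : ∀ j, B (a j) x ^ 2 = B (a j) y ^ 2) : y = x ∨ y = -x :=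
  (ha.complementProperty hι).eq_or_eq_neg_of_sq_eq_sq hB h

/-- If `m ≥ 2n - 1` and `a_1, …, a_m ∈ ℝ^n` is full spark, then the
phaseless measurement map `f(x)_j = |⟨a_j, x⟩|²` is injective up to a global
sign. -/
theorem fullSpark_injective_up_to_sign
    (n m : ℕ) (hn : 0 < n) (hm : 0 < m) (hmn : 2 * n - 1 ≤ m)
    (a : Fin m → Fin n → ℝ)
    (hfs : ∀ s : Finset (Fin m), s.card = n →
      LinearIndependent ℝ (fun j : s => a j)) :
    ∀ x y : Fin n → ℝ,
      (∀ j, |∑ i, a j i * x i| ^ 2 = |∑ i, a j i * y i| ^ 2) →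
      y = x ∨ y = -x := by
  intro x y h
  have ha : FullSpark ℝ a := by simpa [FullSpark] using hfs
  have hcard : 2 * finrank ℝ (Fin n → ℝ) ≤ ENat.card (Fin m) + 1 := by
    rw [finrank_fin_fun, ENat.card_eq_coe_fintype_card, Fintype.card_fin]
    exact_mod_cast (by lia : 2 * n ≤ m + 1)
  simp only [sq_abs] at h
  exact fullSpark_injective_up_to_sign_general ha hcard (separatingRight_dotProductBilin ℝ _) h
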